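/- arXiv:2502.20666 — 4 statements merged into one kernel-verified Lean document; each statement's English description precedes it below -/
import Mathlib

section
/- Let X be a complex Banach space and L an invertible bounded linear operator on X. If L has the shadowing property, then X = E^cs + E^cu, where E^cs = {x ∈ X : sup_{n≥0}‖Lⁿ(x)‖ < ∞} and E^cu = {x ∈ X : sup_{n≥0}‖L⁻ⁿ(x)‖ < ∞}. -/
open Filter Topology

variable {X : Type*} [NormedAddCommGroup X] [NormedSpace ℂ X] [CompleteSpace X]

/-- `L` has the shadowing property. -/
def ShadowingProperty (L : X ≃L[ℂ] X) : Prop :=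
  ∀ ε > (0 : ℝ), ∃ δ > (0 : ℝ), ∀ x : ℤ → X,
    (∀ n : ℤ, ‖L (x n) - x (n + 1)‖ ≤ δ) →
    ∃ p : X, ∀ n : ℤ, ‖(L ^ n) p - x n‖ ≤ ε

/-!
For small `x`, the sequence equal to `Lⁿ x` for `n ≥ 0` and to `0` for `n < 0` is a pseudo-orbit,
its only jump being `x` itself. If the orbit of `p` shadows it, then `Lⁿ (x - p)` is bounded
for `n ≥ 0` and `Lⁿ p` is bounded for `n < 0`, so `x = (x - p) + p` is the required splitting.
Hence `E^cs + E^cu` contains a ball, and a subspace containing a ball is the whole space.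
-/

/-- `δ`-pseudo-orbits of `f`: bi-infinite sequences that follow `f` up to an error `δ` at each
step. -/
def IsPseudoOrbit {E : Type*} [SeminormedAddCommGroup E] (f : E → E) (δ : ℝ) (x : ℤ → E) : Prop :=
  ∀ n : ℤ, ‖f (x n) - x (n + 1)‖ ≤ δ

section TruncatedOrbit

variable {R E : Type*} [Semiring R]

/-- The orbit of `x` under `L` with its past replaced by `0`: a pseudo-orbit whose shadowing
point splits `x` into a center-stable and a center-unstable part. -/
def truncatedOrbit [AddCommMonoid E] [Module R E] (L : E ≃ₗ[R] E) (x : E) (n : ℤ) : E :=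
  if 0 ≤ n then (L ^ n) x else 0

theorem truncatedOrbit_of_nonneg [AddCommMonoid E] [Module R E] (L : E ≃ₗ[R] E) (x : E) {n : ℤ}
    (hn : 0 ≤ n) : truncatedOrbit L x n = (L ^ n) x :=
  if_pos hn

theorem truncatedOrbit_of_neg [AddCommMonoid E] [Module R E] (L : E ≃ₗ[R] E) (x : E) {n : ℤ}
    (hn : n < 0) : truncatedOrbit L x n = 0 :=
  if_neg hn.not_ge

theorem isPseudoOrbit_truncatedOrbit [SeminormedAddCommGroup E] [Module R E] (L : E ≃ₗ[R] E)
    {x : E} {δ : ℝ} (hx : ‖x‖ ≤ δ) : IsPseudoOrbit L δ (truncatedOrbit L x) := by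
  have hδ : 0 ≤ δ := (norm_nonneg x).trans hx
  intro n
  obtain hn | rfl | hn : n + 1 < 0 ∨ n = -1 ∨ 0 ≤ n := by lia
  · simpa [truncatedOrbit_of_neg L x hn, truncatedOrbit_of_neg L x (n := n) (by lia)] using hδ
  · simpa [truncatedOrbit] using hx
  · have horbit : L ((L ^ n) x) = (L ^ (n + 1)) x := by
      rw [add_comm, zpow_one_add, LinearEquiv.mul_apply]
    simpa [truncatedOrbit_of_nonneg L x hn, truncatedOrbit_of_nonneg L x (n := n + 1) (by lia),
      horbit] using hδ

end TruncatedOrbit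

section CenterStable

variable {𝕜 E : Type*} [NormedField 𝕜] [SeminormedAddCommGroup E] [NormedSpace 𝕜 E]

/-- The center-stable subspace `E^cs` of `L`: the vectors with bounded forward orbit. The
center-unstable subspace `E^cu` of `L` is `centerStable L⁻¹`. -/
def centerStable (L : E ≃ₗ[𝕜] E) : Submodule 𝕜 E where
  carrier := {x | ∃ M : ℝ, ∀ n : ℕ, ‖(L ^ n) x‖ ≤ M}
  zero_mem' := ⟨0, fun n => by simp⟩
  add_mem' := by
    rintro x y ⟨M, hM⟩ ⟨N, hN⟩
    exact ⟨M + N, fun n => by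
      rw [map_add]
      exact norm_add_le_of_le (hM n) (hN n)⟩
  smul_mem' := by
    rintro c x ⟨M, hM⟩
    exact ⟨‖c‖ * M, fun n => by
      rw [map_smul, norm_smul]
      exact mul_le_mul_of_nonneg_left (hM n) (norm_nonneg c)⟩

theorem mem_centerStable {L : E ≃ₗ[𝕜] E} {x : E} :
    x ∈ centerStable L ↔ ∃ M : ℝ, ∀ n : ℕ, ‖(L ^ n) x‖ ≤ M :=
  Iff.rfl

variable {L : E ≃ₗ[𝕜] E} {x p : E} {ε : ℝ}

theorem sub_mem_centerStable_of_shadows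
    (hp : ∀ n : ℤ, ‖(L ^ n) p - truncatedOrbit L x n‖ ≤ ε) : x - p ∈ centerStable L := by
  refine mem_centerStable.2 ⟨ε, fun n => ?_⟩
  rw [map_sub, norm_sub_rev]
  simpa [truncatedOrbit_of_nonneg] using hp n

theorem mem_centerStable_inv_of_shadows
    (hp : ∀ n : ℤ, ‖(L ^ n) p - truncatedOrbit L x n‖ ≤ ε) : p ∈ centerStable L⁻¹ := by
  refine mem_centerStable.2 ⟨max ‖p‖ ε, fun n => ?_⟩
  obtain rfl | hn := n.eq_zero_or_pos
  · simp
  · have hpast : ‖(L⁻¹ ^ n) p‖ ≤ ε := by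
      simpa [truncatedOrbit_of_neg, hn] using hp (-n)
    exact hpast.trans (le_max_right _ _)

theorem mem_centerStable_sup_of_shadows
    (hp : ∀ n : ℤ, ‖(L ^ n) p - truncatedOrbit L x n‖ ≤ ε) :
    x ∈ centerStable L ⊔ centerStable L⁻¹ :=
  sub_add_cancel x p ▸ Submodule.add_mem_sup
    (sub_mem_centerStable_of_shadows hp) (mem_centerStable_inv_of_shadows hp)

end CenterStable

theorem eq_add_of_shadowing_general {𝕜 E : Type*} [NontriviallyNormedField 𝕜]
    [SeminormedAddCommGroup E] [NormedSpace 𝕜 E] (L : E ≃ₗ[𝕜] E) {δ ε : ℝ} (hδ : 0 < δ)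
    (hL : ∀ x : ℤ → E, IsPseudoOrbit L δ x → ∃ p : E, ∀ n : ℤ, ‖(L ^ n) p - x n‖ ≤ ε) :
    centerStable L ⊔ centerStable L⁻¹ = ⊤ := by
  have hball : Metric.ball 0 δ ⊆ ((centerStable L ⊔ centerStable L⁻¹ : Submodule 𝕜 E) : Set E) := by
    intro x hx
    obtain ⟨p, hp⟩ := hL _ (isPseudoOrbit_truncatedOrbit L (mem_ball_zero_iff.1 hx).le)
    exact mem_centerStable_sup_of_shadows hp
  exact Submodule.eq_top_of_nonempty_interior' _
    ⟨0, mem_interior_iff_mem_nhds.2 (mem_of_superset (Metric.ball_mem_nhds 0 hδ) hball)⟩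

theorem toLinearEquiv_zpow {R E : Type*} [Semiring R] [AddCommMonoid E] [TopologicalSpace E]
    [Module R E] (L : E ≃L[R] E) (n : ℤ) :
    (L ^ n).toLinearEquiv = L.toLinearEquiv ^ n :=
  map_zpow (MonoidHom.mk' ContinuousLinearEquiv.toLinearEquiv fun _ _ => rfl) L n

theorem mem_centerStable_toLinearEquiv {𝕜 E : Type*} [NormedField 𝕜] [SeminormedAddCommGroup E]
    [NormedSpace 𝕜 E] {L : E ≃L[𝕜] E} {x : E} :
    x ∈ centerStable L.toLinearEquiv ↔ ∃ M : ℝ, ∀ n : ℕ, ‖(L ^ n) x‖ ≤ M := by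
  simp only [mem_centerStable, ← zpow_natCast, ← toLinearEquiv_zpow,
    ContinuousLinearEquiv.coe_toLinearEquiv]

/-- If `L` has the shadowing property then `X = E^cs + E^cu`. -/
theorem eq_add_of_shadowing (L : X ≃L[ℂ] X) (hL : ShadowingProperty L) :
    ∀ x : X, ∃ y ∈ {v : X | ∃ M : ℝ, ∀ n : ℕ, ‖(L ^ n) v‖ ≤ M},
      ∃ z ∈ {v : X | ∃ M : ℝ, ∀ n : ℕ, ‖(L.symm ^ n) v‖ ≤ M}, x = y + z := by
  intro x
  obtain ⟨δ, hδ, hshadow⟩ := hL 1 one_pos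
  have htop := eq_add_of_shadowing_general L.toLinearEquiv hδ (ε := 1) fun x hx => by
    simpa only [← toLinearEquiv_zpow, ContinuousLinearEquiv.coe_toLinearEquiv] using hshadow x hx
  obtain ⟨y, hy, z, hz, hyz⟩ := Submodule.mem_sup.1 (htop ▸ Submodule.mem_top (x := x))
  exact ⟨y, mem_centerStable_toLinearEquiv.1 hy, z,
    mem_centerStable_toLinearEquiv (L := L.symm).1 hz, hyz.symm⟩
end

section
/- Let X be a complex Banach space and L an invertible bounded linear operator on X. If L is uniformly expansive, then there are constants c > 0 and 0 < β < 1 such that E^cs = {x ∈ X : ‖Lⁿ(x)‖ ≤ c βⁿ ‖x‖ for all n ≥ 0}, where E^cs = {x ∈ X : sup_{n≥0}‖Lⁿ(x)‖ < ∞}. -/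
open Filter Topology

variable {X : Type*} [NormedAddCommGroup X] [NormedSpace ℂ X] [CompleteSpace X]

/-- `L` is uniformly expansive. -/
def UniformlyExpansive (L : X ≃L[ℂ] X) : Prop :=
  ∃ m : ℕ, 0 < m ∧ ∀ x : X, ‖x‖ = 1 →
    2 ≤ ‖(L ^ m) x‖ ∨ 2 ≤ ‖(L.symm ^ m) x‖

/-!
If `x` has a bounded orbit and `a k = ‖L ^ (m * k) x‖`, uniform expansivity at the normalization of
`L ^ (m * (k + 1)) x` says that `a (k + 1)` is at most half of one of its two neighbours `a k` and
`a (k + 2)`. Once it fails for the left neighbour, it holds for the right neighbour from then on,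
and `a` grows geometrically. Boundedness therefore forces `2 * a (k + 1) ≤ a k` for every `k`, so
that `a` decays geometrically; as `L` is a bounded operator, the decay extends to the times which
are not multiples of `m`.
-/

/-- Every term of `a` after the first is dominated, with factor `r`, by one of its two neighbours.
For `1 < r` this is uniform expansivity as seen by the norms along an orbit. -/
def IsNeighborDominated (r : ℝ) (a : ℕ → ℝ) : Prop :=
  ∀ n, r * a (n + 1) ≤ a (n + 2) ∨ r * a (n + 1) ≤ a n

namespace IsNeighborDominated

variable {a : ℕ → ℝ} {r : ℝ}

theorem comp_add_right (h : IsNeighborDominated r a) (k : ℕ) :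
    IsNeighborDominated r fun n => a (n + k) :=
  fun n => by simpa only [add_right_comm] using h (n + k)

theorem mul_succ_le_succ_succ (h : IsNeighborDominated r a) (ha : ∀ n, 0 ≤ a n) (hr : 1 < r)
    (h₀ : a 0 < r * a 1) (n : ℕ) : r * a (n + 1) ≤ a (n + 2) := by
  suffices hlt : a n < r * a (n + 1) from (h n).resolve_right hlt.not_ge
  induction n with
  | zero => exact h₀
  | succ n ih =>
    have hpos : 0 < a (n + 1) :=
      pos_of_mul_pos_right ((ha n).trans_lt ih) (zero_le_one.trans hr.le)
    have hexp : r * a (n + 1) ≤ a (n + 2) := (h n).resolve_right ih.not_ge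
    calc a (n + 1) ≤ r * a (n + 1) := le_mul_of_one_le_left (ha _) hr.le
      _ ≤ a (n + 2) := hexp
      _ < r * a (n + 2) :=
        lt_mul_of_one_lt_left ((mul_pos (zero_lt_one.trans hr) hpos).trans_le hexp) hr

theorem tendsto_atTop (h : IsNeighborDominated r a) (ha : ∀ n, 0 ≤ a n) (hr : 1 < r)
    (h₀ : a 0 < r * a 1) : Tendsto a atTop atTop := by
  have hpos : 0 < a 1 := pos_of_mul_pos_right ((ha 0).trans_lt h₀) (zero_le_one.trans hr.le)
  exact (tendsto_add_atTop_iff_nat 1).1 <|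
    tendsto_atTop_of_geom_le hpos hr (h.mul_succ_le_succ_succ ha hr h₀)

theorem mul_succ_le_of_bddAbove (h : IsNeighborDominated r a) (ha : ∀ n, 0 ≤ a n) (hr : 1 < r)
    (hbdd : BddAbove (Set.range a)) (n : ℕ) : r * a (n + 1) ≤ a n := by
  by_contra! hlt
  have htail : Tendsto (fun k => a (k + n)) atTop atTop :=
    (h.comp_add_right n).tendsto_atTop (fun k => ha (k + n)) hr
      (by simpa only [zero_add, add_comm 1 n] using hlt)
  exact not_bddAbove_of_tendsto_atTop ((tendsto_add_atTop_iff_nat n).1 htail) hbdd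

theorem le_inv_pow_mul_of_bddAbove (h : IsNeighborDominated r a) (ha : ∀ n, 0 ≤ a n) (hr : 1 < r)
    (hbdd : BddAbove (Set.range a)) (n : ℕ) : a n ≤ r⁻¹ ^ n * a 0 := by
  have hr₀ : 0 < r := zero_lt_one.trans hr
  exact le_geom (inv_nonneg.2 hr₀.le) n fun k _ =>
    (le_inv_mul_iff₀ hr₀).2 (h.mul_succ_le_of_bddAbove ha hr hbdd k)

end IsNeighborDominated

section Iterates

variable {E : Type*} [SeminormedAddGroup E] {f : E → E} {x : E} {K r β : ℝ} {m : ℕ}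

theorem isNeighborDominated_norm_iterate
    (hf : ∀ y, r * ‖f y‖ ≤ ‖f (f y)‖ ∨ r * ‖f y‖ ≤ ‖y‖) (x : E) :
    IsNeighborDominated r fun n => ‖f^[n] x‖ :=
  fun n => by simpa only [Function.iterate_succ_apply'] using hf (f^[n] x)

theorem norm_iterate_le_inv_pow_mul_of_bddAbove (hr : 1 < r)
    (hf : ∀ y, r * ‖f y‖ ≤ ‖f (f y)‖ ∨ r * ‖f y‖ ≤ ‖y‖)
    (hx : BddAbove (Set.range fun n => ‖f^[n] x‖)) (n : ℕ) :
    ‖f^[n] x‖ ≤ r⁻¹ ^ n * ‖x‖ :=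
  (isNeighborDominated_norm_iterate hf x).le_inv_pow_mul_of_bddAbove
    (fun _ => norm_nonneg _) hr hx n

theorem norm_iterate_le_pow_mul (hK₀ : 0 ≤ K) (hK : ∀ y, ‖f y‖ ≤ K * ‖y‖) (x : E) (n : ℕ) :
    ‖f^[n] x‖ ≤ K ^ n * ‖x‖ :=
  le_geom (u := fun k => ‖f^[k] x‖) hK₀ n fun k _ => by
    simpa only [Function.iterate_succ_apply'] using hK (f^[k] x)

theorem norm_iterate_le_of_norm_iterate_mul_le (hK₀ : 0 ≤ K) (hK : ∀ y, ‖f y‖ ≤ K * ‖y‖)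
    (hm : m ≠ 0) (hβ : 0 < β) (hx : ∀ k, ‖f^[m * k] x‖ ≤ β ^ (m * k) * ‖x‖) (n : ℕ) :
    ‖f^[n] x‖ ≤ (∑ j ∈ Finset.range m, (K / β) ^ j) * β ^ n * ‖x‖ := by
  set j := n % m
  set k := n / m
  have hn : j + m * k = n := Nat.mod_add_div n m
  have hj : j ∈ Finset.range m := Finset.mem_range.2 (Nat.mod_lt n (Nat.pos_of_ne_zero hm))
  calc ‖f^[n] x‖ = ‖f^[j] (f^[m * k] x)‖ := by rw [← Function.iterate_add_apply, hn]
    _ ≤ K ^ j * ‖f^[m * k] x‖ := norm_iterate_le_pow_mul hK₀ hK _ j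
    _ ≤ K ^ j * (β ^ (m * k) * ‖x‖) := by gcongr; exact hx k
    _ = (K / β) ^ j * β ^ n * ‖x‖ := by rw [← hn, pow_add, div_pow]; field_simp
    _ ≤ (∑ i ∈ Finset.range m, (K / β) ^ i) * β ^ n * ‖x‖ := by
      gcongr
      exact Finset.single_le_sum (f := fun i => (K / β) ^ i) (fun i _ => by positivity) hj

end Iterates

theorem exists_pos_lt_one_pow_eq {q : ℝ} (hq₀ : 0 < q) (hq₁ : q < 1) {m : ℕ} (hm : m ≠ 0) :
    ∃ β : ℝ, 0 < β ∧ β < 1 ∧ β ^ m = q :=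
  ⟨q ^ (m : ℝ)⁻¹, by positivity, Real.rpow_lt_one hq₀.le hq₁ (by positivity),
    Real.rpow_inv_natCast_pow hq₀.le hm⟩

/-- The condition `hf` is uniform expansivity at the points `f^[m] x`, with `x` in the role of their
`m`-th backward iterate, so that `f` need not be invertible. -/
theorem centerStable_of_uniformlyExpansive_general {E : Type*} [SeminormedAddGroup E] {f : E → E}
    {K r : ℝ} {m : ℕ} (hK₀ : 0 ≤ K) (hK : ∀ x, ‖f x‖ ≤ K * ‖x‖) (hr : 1 < r) (hm : m ≠ 0)
    (hf : ∀ x, r * ‖f^[m] x‖ ≤ ‖f^[m] (f^[m] x)‖ ∨ r * ‖f^[m] x‖ ≤ ‖x‖) :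
    ∃ c > (0 : ℝ), ∃ β : ℝ, 0 < β ∧ β < 1 ∧
      {x : E | ∃ M : ℝ, ∀ n : ℕ, ‖f^[n] x‖ ≤ M} =
        {x : E | ∀ n : ℕ, ‖f^[n] x‖ ≤ c * β ^ n * ‖x‖} := by
  obtain ⟨β, hβ₀, hβ₁, hβm⟩ :=
    exists_pos_lt_one_pow_eq (inv_pos.2 (zero_lt_one.trans hr)) (inv_lt_one_of_one_lt₀ hr) hm
  set c := ∑ j ∈ Finset.range m, (K / β) ^ j
  have hc : 0 < c := geom_sum_pos (div_nonneg hK₀ hβ₀.le) hm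
  refine ⟨c, hc, β, hβ₀, hβ₁, Set.Subset.antisymm ?_ ?_⟩
  · rintro x ⟨M, hM⟩
    have hbdd : BddAbove (Set.range fun k => ‖(f^[m])^[k] x‖) :=
      ⟨M, Set.forall_mem_range.2 fun k => by simpa only [Function.iterate_mul] using hM (m * k)⟩
    refine norm_iterate_le_of_norm_iterate_mul_le hK₀ hK hm hβ₀ fun k => ?_
    rw [Function.iterate_mul, pow_mul, hβm]
    exact norm_iterate_le_inv_pow_mul_of_bddAbove hr hf hbdd k
  · intro x hx
    refine ⟨c * ‖x‖, fun n => (hx n).trans ?_⟩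
    gcongr
    exact mul_le_of_le_one_right hc.le (pow_le_one₀ hβ₀.le hβ₁.le)

theorem mul_norm_le_or_mul_norm_le_of_sphere {𝕜 E F G : Type*} [RCLike 𝕜]
    [SeminormedAddCommGroup E] [NormedSpace 𝕜 E] [SeminormedAddCommGroup F] [NormedSpace 𝕜 F]
    [SeminormedAddCommGroup G] [NormedSpace 𝕜 G] {r : ℝ} (A : E →ₗ[𝕜] F) (B : E →ₗ[𝕜] G)
    (h : ∀ x, ‖x‖ = 1 → r ≤ ‖A x‖ ∨ r ≤ ‖B x‖) (x : E) :
    r * ‖x‖ ≤ ‖A x‖ ∨ r * ‖x‖ ≤ ‖B x‖ := by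
  obtain hx | hx := (norm_nonneg x).eq_or_lt
  · left
    simp only [← hx, mul_zero, norm_nonneg]
  · have hnorm : ‖(‖x‖⁻¹ : 𝕜)‖ = ‖x‖⁻¹ := by simp
    have hunit : ‖(‖x‖⁻¹ : 𝕜) • x‖ = 1 := by rw [norm_smul, hnorm, inv_mul_cancel₀ hx.ne']
    simpa only [map_smul, norm_smul, hnorm, le_inv_mul_iff₀' hx] using h _ hunit

theorem continuousLinearEquiv_coe_pow {R M : Type*} [Semiring R] [AddCommMonoid M] [Module R M]
    [TopologicalSpace M] (L : M ≃L[R] M) (n : ℕ) : ⇑(L ^ n) = L^[n] :=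
  hom_coe_pow _ rfl (fun _ _ => rfl) L n

theorem UniformlyExpansive.exists_two_mul_norm_iterate_le {E : Type*} [NormedAddCommGroup E]
    [NormedSpace ℂ E] {L : E ≃L[ℂ] E} (hL : UniformlyExpansive L) :
    ∃ m ≠ 0, ∀ x, 2 * ‖L^[m] x‖ ≤ ‖L^[m] (L^[m] x)‖ ∨ 2 * ‖L^[m] x‖ ≤ ‖x‖ := by
  obtain ⟨m, hm, hexp⟩ := hL
  refine ⟨m, hm.ne', fun x => ?_⟩
  have hback : L.symm^[m] (L^[m] x) = x := Function.LeftInverse.iterate L.symm_apply_apply m x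
  have hdichotomy :
      2 * ‖L^[m] x‖ ≤ ‖(L ^ m) (L^[m] x)‖ ∨ 2 * ‖L^[m] x‖ ≤ ‖(L.symm ^ m) (L^[m] x)‖ :=
    mul_norm_le_or_mul_norm_le_of_sphere (L ^ m).toLinearMap (L.symm ^ m).toLinearMap hexp (L^[m] x)
  simpa only [continuousLinearEquiv_coe_pow, hback] using hdichotomy

theorem centerStable_of_uniformlyExpansive (L : X ≃L[ℂ] X)
    (hL : UniformlyExpansive L) :
    ∃ c > (0 : ℝ), ∃ β : ℝ, 0 < β ∧ β < 1 ∧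
      {x : X | ∃ M : ℝ, ∀ n : ℕ, ‖(L ^ n) x‖ ≤ M} =
        {x : X | ∀ n : ℕ, ‖(L ^ n) x‖ ≤ c * β ^ n * ‖x‖} := by
  obtain ⟨m, hm, hexp⟩ := hL.exists_two_mul_norm_iterate_le
  simpa only [continuousLinearEquiv_coe_pow, ContinuousLinearEquiv.coe_coe] using
    centerStable_of_uniformlyExpansive_general (norm_nonneg _) (L : X →L[ℂ] X).le_opNorm
      one_lt_two hm hexp
end

section
/- Let X be a complex Banach space and L an invertible bounded linear operator on X with the shadowing property. If L is expansive, or more generally if L is asymptotically expansive, then L is uniformly expansive. -/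
open Filter Topology

variable {X : Type*} [NormedAddCommGroup X] [NormedSpace ℂ X] [CompleteSpace X]

/-- `L` is expansive. -/
def Expansive (L : X ≃L[ℂ] X) : Prop :=
  ∃ ε > (0 : ℝ), ∀ x : X, (∀ n : ℤ, ‖(L ^ n) x‖ ≤ ε) → x = 0

/-- `L` is asymptotically expansive. -/
def AsymptoticallyExpansive (L : X ≃L[ℂ] X) : Prop :=
  ∃ ε > (0 : ℝ), ∀ x : X, (∀ n : ℕ, ‖(L ^ n) x‖ ≤ ε) →
    Tendsto (fun n : ℕ => (L ^ n) x) atTop (𝓝 0)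

/-!
Let `|μ| = 1`. If `x` is an approximate eigenvector of `L` for `μ`, then `μⁿ x` is a pseudo-orbit; a
point shadowing it has a bounded orbit that stays away from `0`, so expansivity bounds `μ - L` from
below. Shadowing a trajectory with forcing terms `μⁿ z` gives a bounded solution `y` of
`yₙ₊₁ = L yₙ + μⁿ z`, and the Cesàro means of `μ⁻ⁿ yₙ` show that `z` is a limit of vectors in the
range of `μ - L`. Hence the spectrum of `L` does not meet the unit circle.

For such an `L`, the function `μ ↦ μ (μ - L)⁻¹` has mean `(1 - Lⁿ)⁻¹` over the `n`-th roots of `1`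
and `(1 + Lⁿ)⁻¹` over the `n`-th roots of `-1`. Pairing neighbouring roots, uniform continuity on
the circle makes the difference of the two means tend to `0`. Half this difference is
`Lⁿ (1 - L²ⁿ)⁻¹ = (L⁻ⁿ - Lⁿ)⁻¹`, so `‖x‖ ≤ ε (‖Lⁿ x‖ + ‖L⁻ⁿ x‖)` for all large `n`.
-/

section ResolventSums

variable {R A : Type*} [CommRing R] [Ring A] [Algebra R A] {ζ : R} {n : ℕ}

theorem sum_mul_pow_pow_eq_zero_of_isPrimitiveRoot [IsDomain R] (hζ : IsPrimitiveRoot ζ n)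
    (η : R) {m : ℕ} (hm : m ≠ 0) (hmn : m < n) : ∑ k ∈ Finset.range n, (η * ζ ^ k) ^ m = 0 := by
  have hgeom : ∑ k ∈ Finset.range n, (ζ ^ m) ^ k = 0 := by
    refine eq_zero_of_ne_zero_of_mul_left_eq_zero
      (sub_ne_zero.2 (hζ.pow_ne_one_of_pos_of_lt hm hmn)) ?_
    rw [mul_geom_sum, pow_right_comm, hζ.pow_eq_one, one_pow, sub_self]
  simp_rw [mul_pow, pow_right_comm ζ _ m, ← Finset.mul_sum, hgeom, mul_zero]

theorem smul_resolvent_mul_pow_sub_pow {a : A} {μ : R} (hμ : μ ∈ resolventSet R a) (n : ℕ) :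
    (μ • resolvent a μ) * (algebraMap R A (μ ^ n) - a ^ n) =
      ∑ i ∈ Finset.range n, μ ^ (i + 1) • a ^ (n - 1 - i) := by
  have hinv : resolvent a μ * (algebraMap R A μ - a) = 1 := Ring.inverse_mul_cancel _ hμ
  rw [map_pow, ← (Algebra.commute_algebraMap_left μ a).mul_geom_sum₂, smul_mul_assoc, ← mul_assoc,
    hinv, one_mul, Finset.smul_sum]
  refine Finset.sum_congr rfl fun i _ ↦ ?_
  rw [← map_pow, ← Algebra.smul_def, smul_smul, ← pow_succ']

theorem sum_smul_resolvent_mul [IsDomain R] {a : A} (hζ : IsPrimitiveRoot ζ n) {η : R}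
    (hη : ∀ k, η * ζ ^ k ∈ resolventSet R a) :
    (∑ k ∈ Finset.range n, (η * ζ ^ k) • resolvent a (η * ζ ^ k)) *
      (algebraMap R A (η ^ n) - a ^ n) = (n * η ^ n) • 1 := by
  have hpow (k : ℕ) : (η * ζ ^ k) ^ n = η ^ n := by
    rw [mul_pow, pow_right_comm, hζ.pow_eq_one, one_pow, mul_one]
  calc _ = ∑ k ∈ Finset.range n, ∑ i ∈ Finset.range n, (η * ζ ^ k) ^ (i + 1) • a ^ (n - 1 - i) := by
        rw [Finset.sum_mul]
        exact Finset.sum_congr rfl fun k _ ↦ hpow k ▸ smul_resolvent_mul_pow_sub_pow (hη k) n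
    _ = ∑ i ∈ Finset.range n, (∑ k ∈ Finset.range n, (η * ζ ^ k) ^ (i + 1)) • a ^ (n - 1 - i) := by
        simp_rw [Finset.sum_smul]
        exact Finset.sum_comm
    _ = (n * η ^ n) • 1 := by
        obtain _ | n := n
        · simp
        rw [Finset.sum_range_succ, Finset.sum_eq_zero fun i hi ↦ ?_]
        · simp [hpow]
        · rw [sum_mul_pow_pow_eq_zero_of_isPrimitiveRoot hζ η i.succ_ne_zero
            (Nat.succ_lt_succ (Finset.mem_range.1 hi)), zero_smul]

-- The two halves sum to `n / (1 - aⁿ)` and `n / (1 + aⁿ)`, whose difference is `2n aⁿ / (1 - a²ⁿ)`.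
theorem sum_smul_resolvent_sub_mul [IsDomain R] {a : A} (hζ : IsPrimitiveRoot ζ n) {ω : R}
    (hω : ω ^ n = -1) (hζ_mem : ∀ k, ζ ^ k ∈ resolventSet R a)
    (hωζ_mem : ∀ k, ω * ζ ^ k ∈ resolventSet R a) :
    (∑ k ∈ Finset.range n,
      (ζ ^ k • resolvent a (ζ ^ k) - (ω * ζ ^ k) • resolvent a (ω * ζ ^ k))) *
      (1 - a ^ (2 * n)) = (2 * n : R) • a ^ n := by
  have hone : (∑ k ∈ Finset.range n, ζ ^ k • resolvent a (ζ ^ k)) * (1 - a ^ n) = (n : R) • 1 := by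
    have h := sum_smul_resolvent_mul hζ (η := 1) (by simpa only [one_mul] using hζ_mem)
    simp_rw [one_mul] at h
    rwa [one_pow, map_one, mul_one] at h
  have hneg : (∑ k ∈ Finset.range n, (ω * ζ ^ k) • resolvent a (ω * ζ ^ k)) * (1 + a ^ n) =
      (n : R) • 1 := by
    have h := sum_smul_resolvent_mul hζ hωζ_mem
    rw [hω, map_neg, map_one, ← neg_add', mul_neg, mul_neg_one, neg_smul] at h
    exact neg_injective h
  have hfactor : 1 - a ^ (2 * n) = (1 + a ^ n) * (1 - a ^ n) := by
    rw [pow_mul', ← (Commute.one_left _).sq_sub_sq, one_pow]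
  have hfactor' : 1 - a ^ (2 * n) = (1 - a ^ n) * (1 + a ^ n) := by
    rw [hfactor]; noncomm_ring
  rw [Finset.sum_sub_distrib, sub_mul]
  nth_rw 1 [hfactor']
  rw [hfactor, ← mul_assoc, ← mul_assoc, hone, hneg, smul_one_mul, smul_one_mul, ← smul_sub,
    mul_comm, mul_smul, add_sub_sub_cancel, ← two_smul R]

end ResolventSums

theorem eventually_exists_pow_eq_neg_one_norm_sub_one_lt {δ : ℝ} (hδ : 0 < δ) :
    ∀ᶠ n : ℕ in atTop, ∃ ω : ℂ, ω ^ n = -1 ∧ ‖ω - 1‖ < δ := by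
  have hlim : Tendsto (fun n : ℕ ↦ Complex.exp (Real.pi * Complex.I / n)) atTop (𝓝 1) := by
    rw [← Complex.exp_zero]
    exact (Complex.continuous_exp.tendsto 0).comp (tendsto_const_div_atTop_nhds_zero_nat _)
  filter_upwards [hlim.eventually (Metric.ball_mem_nhds 1 hδ), eventually_ne_atTop 0] with n hn hn₀
  refine ⟨_, ?_, mem_ball_iff_norm.1 hn⟩
  rw [← Complex.exp_nat_mul, mul_div_cancel₀ _ (Nat.cast_ne_zero.2 hn₀), Complex.exp_pi_mul_I]

section BanachAlgebra

variable {A : Type*} [NormedRing A] [NormedAlgebra ℂ A] [CompleteSpace A] {a : A}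

theorem uniformContinuousOn_smul_resolvent {s : Set ℂ} (hs : IsCompact s)
    (h : s ⊆ resolventSet ℂ a) : UniformContinuousOn (fun μ : ℂ ↦ μ • resolvent a μ) s :=
  hs.uniformContinuousOn_of_continuous fun _ hμ ↦ ContinuousAt.continuousWithinAt <|
    continuousAt_id.smul (spectrum.hasDerivAt_resolvent_const_left (h hμ)).continuousAt

theorem eventually_exists_norm_le_mul_one_sub_pow_eq_pow
    (ha : Metric.sphere 0 1 ⊆ resolventSet ℂ a) {ε : ℝ} (hε : 0 < ε) :
    ∀ᶠ n : ℕ in atTop, ∃ d : A, ‖d‖ ≤ ε ∧ d * (1 - a ^ (2 * n)) = a ^ n := by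
  obtain ⟨δ, hδ, hunif⟩ := Metric.uniformContinuousOn_iff.1
    (uniformContinuousOn_smul_resolvent (isCompact_sphere 0 1) ha) ε hε
  filter_upwards [eventually_exists_pow_eq_neg_one_norm_sub_one_lt hδ, eventually_ne_atTop 0]
    with n ⟨ω, hωn, hω_lt⟩ hn₀
  obtain ⟨ζ, hζ⟩ : ∃ ζ : ℂ, IsPrimitiveRoot ζ n := ⟨_, Complex.isPrimitiveRoot_exp n hn₀⟩
  have hω : ‖ω‖ = 1 :=
    (pow_eq_one_iff_of_nonneg (norm_nonneg _) hn₀).1 (by rw [← norm_pow, hωn, norm_neg, norm_one])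
  have hζk (k : ℕ) : ‖ζ ^ k‖ = 1 := by rw [norm_pow, hζ.norm'_eq_one hn₀, one_pow]
  have hζ_mem (k : ℕ) : ζ ^ k ∈ Metric.sphere (0 : ℂ) 1 := mem_sphere_zero_iff_norm.2 (hζk k)
  have hωζ_mem (k : ℕ) : ω * ζ ^ k ∈ Metric.sphere (0 : ℂ) 1 := by
    rw [mem_sphere_zero_iff_norm, norm_mul, hω, hζk, one_mul]
  have hclose (k : ℕ) :
      ‖ζ ^ k • resolvent a (ζ ^ k) - (ω * ζ ^ k) • resolvent a (ω * ζ ^ k)‖ ≤ ε := by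
    rw [← dist_eq_norm]
    refine (hunif _ (hζ_mem k) _ (hωζ_mem k) ?_).le
    rwa [dist_comm, dist_eq_norm, ← sub_one_mul, norm_mul, hζk, mul_one]
  have hn₂ : (2 * n : ℂ) ≠ 0 := mul_ne_zero two_ne_zero (Nat.cast_ne_zero.2 hn₀)
  refine ⟨(2 * n : ℂ)⁻¹ • ∑ k ∈ Finset.range n,
    (ζ ^ k • resolvent a (ζ ^ k) - (ω * ζ ^ k) • resolvent a (ω * ζ ^ k)), ?_, ?_⟩
  · have hsum := norm_sum_le_of_le (Finset.range n) fun k _ ↦ hclose k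
    rw [Finset.sum_const, Finset.card_range, nsmul_eq_mul] at hsum
    rw [norm_smul, norm_inv, norm_mul, Complex.norm_natCast, Complex.norm_two,
      inv_mul_le_iff₀ (by positivity)]
    nlinarith [mul_nonneg n.cast_nonneg hε.le]
  · rw [smul_mul_assoc, sum_smul_resolvent_sub_mul hζ hωn (fun k ↦ ha (hζ_mem k))
      (fun k ↦ ha (hωζ_mem k)), inv_smul_smul₀ hn₂]

end BanachAlgebra

theorem algebraMap_sub_apply_sum_inv_pow_smul {𝕜 E : Type*} [NormedField 𝕜]
    [SeminormedAddCommGroup E] [NormedSpace 𝕜 E] {L : E →L[𝕜] E} {μ : 𝕜} (hμ : μ ≠ 0) {z : E}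
    {y : ℕ → E} (hy : ∀ n, y (n + 1) = L (y n) + μ ^ n • z) (N : ℕ) :
    (algebraMap 𝕜 (E →L[𝕜] E) μ - L) (∑ n ∈ Finset.range N, (μ ^ n)⁻¹ • y n) =
      (N : 𝕜) • z - μ • ((μ ^ N)⁻¹ • y N - y 0) := by
  have hstep (n : ℕ) : (algebraMap 𝕜 (E →L[𝕜] E) μ - L) ((μ ^ n)⁻¹ • y n) =
      z - μ • ((μ ^ (n + 1))⁻¹ • y (n + 1) - (μ ^ n)⁻¹ • y n) := by
    have hL : L (y n) = y (n + 1) - μ ^ n • z := eq_sub_of_add_eq (hy n).symm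
    calc _ = μ • (μ ^ n)⁻¹ • y n - (μ ^ n)⁻¹ • L (y n) := by
          rw [sub_apply, map_smul L, Algebra.algebraMap_eq_smul_one, smul_apply, one_apply_eq_self]
      _ = μ • (μ ^ n)⁻¹ • y n - (μ • (μ ^ (n + 1))⁻¹ • y (n + 1) - z) := by
          rw [hL, smul_sub, inv_smul_smul₀ (pow_ne_zero n hμ), pow_succ', mul_inv, mul_smul,
            smul_inv_smul₀ hμ]
      _ = _ := by rw [smul_sub]; abel
  simp_rw [map_sum, hstep, Finset.sum_sub_distrib, ← Finset.smul_sum]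
  rw [Finset.sum_range_sub (fun n ↦ (μ ^ n)⁻¹ • y n)]
  simp [Nat.cast_smul_eq_nsmul]

theorem mem_closure_range_algebraMap_sub_of_bounded {𝕜 E : Type*} [RCLike 𝕜]
    [SeminormedAddCommGroup E] [NormedSpace 𝕜 E] {L : E →L[𝕜] E} {μ : 𝕜} (hμ : ‖μ‖ = 1) {z : E}
    {y : ℕ → E} {C : ℝ} (hC : ∀ n, ‖y n‖ ≤ C) (hy : ∀ n, y (n + 1) = L (y n) + μ ^ n • z) :
    z ∈ closure (Set.range (algebraMap 𝕜 (E →L[𝕜] E) μ - L)) := by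
  have hμ₀ : μ ≠ 0 := norm_ne_zero_iff.1 (hμ ▸ one_ne_zero)
  have hbdd (N : ℕ) : ‖μ • ((μ ^ N)⁻¹ • y N - y 0)‖ ≤ C + C := by
    rw [norm_smul, hμ, one_mul]
    refine (norm_sub_le _ _).trans (add_le_add ?_ (hC 0))
    simpa [norm_smul, hμ] using hC N
  have hlim : Tendsto (fun N : ℕ ↦ z - (N : 𝕜)⁻¹ • (μ • ((μ ^ N)⁻¹ • y N - y 0))) atTop (𝓝 z) := by
    simpa using tendsto_const_nhds.sub <|
      (tendsto_inv_atTop_nhds_zero_nat (𝕜 := 𝕜)).zero_smul_isBoundedUnder_le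
        (isBoundedUnder_of ⟨C + C, hbdd⟩)
  refine mem_closure_of_tendsto hlim ?_
  filter_upwards [eventually_ne_atTop 0] with N hN
  refine ⟨(N : 𝕜)⁻¹ • ∑ n ∈ Finset.range N, (μ ^ n)⁻¹ • y n, ?_⟩
  rw [map_smul, algebraMap_sub_apply_sum_inv_pow_smul hμ₀ hy, smul_sub,
    inv_smul_smul₀ (Nat.cast_ne_zero.2 hN)]

theorem exists_antilipschitzWith_of_le_norm_on_sphere {𝕜 E F : Type*} [RCLike 𝕜]
    [SeminormedAddCommGroup E] [NormedSpace 𝕜 E] [SeminormedAddCommGroup F] [NormedSpace 𝕜 F]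
    {f : E →L[𝕜] F} {r δ : ℝ} (hδ : 0 < δ) (hr : 0 < r)
    (hf : ∀ x, ‖x‖ = r → δ ≤ ‖f x‖) : ∃ c, AntilipschitzWith c f := by
  refine ⟨(r / δ).toNNReal, f.antilipschitz_of_bound fun x ↦ ?_⟩
  rw [Real.coe_toNNReal _ (by positivity), div_mul_eq_mul_div, le_div_iff₀ hδ]
  obtain hx₀ | hx₀ := (norm_nonneg x).eq_or_lt
  · rw [← hx₀, zero_mul]
    positivity
  have h := hf (((r / ‖x‖ : ℝ) : 𝕜) • x) (by
    rw [norm_smul, RCLike.norm_ofReal, abs_of_pos (by positivity), div_mul_cancel₀ _ hx₀.ne'])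
  rw [map_smul, norm_smul, RCLike.norm_ofReal, abs_of_pos (by positivity), div_mul_eq_mul_div,
    le_div_iff₀ hx₀] at h
  rwa [mul_comm]

section Shadowing

variable {E : Type*} [NormedAddCommGroup E] [NormedSpace ℂ E] {L : E ≃L[ℂ] E}

theorem ShadowingProperty.exists_bounded_solution (hL : ShadowingProperty L) {ε : ℝ} (hε : 0 < ε) :
    ∃ δ > 0, ∀ z : ℕ → E, (∀ n, ‖z n‖ ≤ δ) →
      ∃ y : ℕ → E, (∀ n, ‖y n‖ ≤ ε) ∧ ∀ n, y (n + 1) = L (y n) + z n := by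
  obtain ⟨δ, hδ, hshadow⟩ := hL ε hε
  refine ⟨δ, hδ, fun z hz ↦ ?_⟩
  let s : ℕ → E := Nat.rec 0 fun n sₙ ↦ L sₙ + z n
  have hs₀ : s 0 = 0 := rfl
  have hs (n : ℕ) : s (n + 1) = L (s n) + z n := rfl
  have hpseudo (n : ℤ) : ‖L (s n.toNat) - s (n + 1).toNat‖ ≤ δ := by
    rcases le_or_gt 0 n with hn | hn
    · lift n to ℕ using hn
      simpa [hs] using hz n
    · simpa [Int.toNat_of_nonpos hn.le, Int.toNat_of_nonpos (Int.add_one_le_of_lt hn), hs₀]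
        using hδ.le
  obtain ⟨p, hp⟩ := hshadow (fun n ↦ s n.toNat) hpseudo
  refine ⟨fun n ↦ s n - (L ^ n) p, fun n ↦ ?_, fun n ↦ ?_⟩
  · simpa [norm_sub_rev] using hp n
  · have hpow : (L ^ (n + 1)) p = L ((L ^ n) p) := by rw [pow_succ']; rfl
    simp only [hs, hpow, map_sub]
    abel

theorem ShadowingProperty.topologicalClosure_range_eq_top (hL : ShadowingProperty L) {μ : ℂ}
    (hμ : ‖μ‖ = 1) :
    (algebraMap ℂ (E →L[ℂ] E) μ - (L : E →L[ℂ] E)).range.topologicalClosure = ⊤ := by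
  obtain ⟨δ, hδ, hsolve⟩ := hL.exists_bounded_solution one_pos
  refine Submodule.eq_top_of_nonempty_interior' _ ⟨0, mem_interior_iff_mem_nhds.2 <|
    mem_of_superset (Metric.closedBall_mem_nhds 0 hδ) fun z hz ↦ ?_⟩
  obtain ⟨y, hy_le, hy⟩ := hsolve (fun n ↦ μ ^ n • z) fun n ↦ by
    simpa [norm_smul, hμ] using hz
  exact mem_closure_range_algebraMap_sub_of_bounded (L := (L : E →L[ℂ] E)) hμ hy_le hy

theorem ShadowingProperty.exists_antilipschitzWith (hL : ShadowingProperty L) {ε : ℝ} (hε : 0 < ε)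
    (hasymp : ∀ x : E, (∀ n : ℤ, ‖(L ^ n) x‖ ≤ ε) → Tendsto (fun n : ℕ ↦ (L ^ n) x) atTop (𝓝 0))
    {μ : ℂ} (hμ : ‖μ‖ = 1) :
    ∃ c, AntilipschitzWith c (algebraMap ℂ (E →L[ℂ] E) μ - (L : E →L[ℂ] E)) := by
  have hμ₀ : μ ≠ 0 := norm_ne_zero_iff.1 (hμ ▸ one_ne_zero)
  obtain ⟨δ, hδ, hshadow⟩ := hL (ε / 3) (by positivity)
  refine exists_antilipschitzWith_of_le_norm_on_sphere hδ (r := 2 * ε / 3) (by positivity)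
    fun x hx ↦ ?_
  by_contra! hlt
  have hpseudo (n : ℤ) : ‖L (μ ^ n • x) - μ ^ (n + 1) • x‖ ≤ δ := by
    have hsub : L (μ ^ n • x) - μ ^ (n + 1) • x =
        -(μ ^ n • (algebraMap ℂ (E →L[ℂ] E) μ - (L : E →L[ℂ] E)) x) := by
      simp [Algebra.algebraMap_eq_smul_one, zpow_add_one₀ hμ₀, mul_smul, smul_sub]
    rw [hsub, norm_neg, norm_smul, norm_zpow, hμ, one_zpow, one_mul]
    exact hlt.le
  obtain ⟨p, hp⟩ := hshadow (fun n ↦ μ ^ n • x) hpseudo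
  have horbit (n : ℤ) : ‖μ ^ n • x‖ = 2 * ε / 3 := by
    rw [norm_smul, norm_zpow, hμ, one_zpow, one_mul, hx]
  have hp_le (n : ℤ) : ‖(L ^ n) p‖ ≤ ε := by
    linarith [norm_le_norm_sub_add ((L ^ n) p) (μ ^ n • x), hp n, horbit n]
  have hp_ge (n : ℕ) : ε / 3 ≤ ‖(L ^ n) p‖ := by
    have h := norm_le_norm_add_norm_sub ((L ^ (n : ℤ)) p) (μ ^ (n : ℤ) • x)
    rw [← zpow_natCast]
    linarith [hp n, horbit n]
  have hlim := ge_of_tendsto' (hasymp p hp_le).norm hp_ge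
  rw [norm_zero] at hlim
  linarith

theorem ShadowingProperty.sphere_subset_resolventSet [CompleteSpace E] (hL : ShadowingProperty L)
    {ε : ℝ} (hε : 0 < ε)
    (hasymp : ∀ x : E, (∀ n : ℤ, ‖(L ^ n) x‖ ≤ ε) → Tendsto (fun n : ℕ ↦ (L ^ n) x) atTop (𝓝 0)) :
    Metric.sphere 0 1 ⊆ resolventSet ℂ (L : E →L[ℂ] E) := fun μ hμ ↦ by
  have hμ : ‖μ‖ = 1 := mem_sphere_zero_iff_norm.1 hμ
  exact ContinuousLinearMap.isUnit_iff_bijective.2 <|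
    (ContinuousLinearMap.bijective_iff_dense_range_and_antilipschitz _).2
      ⟨hL.topologicalClosure_range_eq_top hμ, hL.exists_antilipschitzWith hε hasymp hμ⟩

end Shadowing

section Powers

variable {R M : Type*} [Semiring R] [TopologicalSpace M] [AddCommMonoid M] [Module R M]

theorem coe_continuousLinearEquiv_pow_apply (L : M ≃L[R] M) (n : ℕ) (x : M) :
    ((L : M →L[R] M) ^ n) x = (L ^ n) x := by
  induction n with
  | zero => rfl
  | succ n ih => rw [pow_succ', pow_succ']; exact congrArg L ih

theorem pow_apply_symm_pow_apply (L : M ≃L[R] M) (n : ℕ) (x : M) :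
    (L ^ n) ((L.symm ^ n) x) = x := by
  have h : L ^ n * L⁻¹ ^ n = 1 := by rw [inv_pow, mul_inv_cancel]
  exact DFunLike.congr_fun h x

end Powers

section UniformExpansivity

variable {E : Type*} [NormedAddCommGroup E] [NormedSpace ℂ E] {L : E ≃L[ℂ] E}

theorem eventually_norm_le_mul_norm_pow_add_norm_symm_pow [CompleteSpace E]
    (hL : Metric.sphere 0 1 ⊆ resolventSet ℂ (L : E →L[ℂ] E)) {ε : ℝ} (hε : 0 < ε) :
    ∀ᶠ n : ℕ in atTop, ∀ x : E, ‖x‖ ≤ ε * (‖(L ^ n) x‖ + ‖(L.symm ^ n) x‖) := by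
  filter_upwards [eventually_exists_norm_le_mul_one_sub_pow_eq_pow hL hε] with n ⟨d, hd_le, hd⟩ x
  have hx : d ((L.symm ^ n) x - (L ^ n) x) = x := by
    have h := DFunLike.congr_fun hd ((L.symm ^ n) x)
    simpa only [mul_apply_eq_comp, sub_apply, one_apply_eq_self, two_mul, pow_add,
      coe_continuousLinearEquiv_pow_apply, pow_apply_symm_pow_apply] using h
  calc ‖x‖ = ‖d ((L.symm ^ n) x - (L ^ n) x)‖ := by rw [hx]
    _ ≤ ε * ‖(L.symm ^ n) x - (L ^ n) x‖ := d.le_of_opNorm_le hd_le _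
    _ ≤ ε * (‖(L ^ n) x‖ + ‖(L.symm ^ n) x‖) := by
        gcongr
        exact (norm_sub_le _ _).trans_eq (add_comm _ _)

theorem uniformlyExpansive_of_sphere_subset_resolventSet [CompleteSpace E]
    (hL : Metric.sphere 0 1 ⊆ resolventSet ℂ (L : E →L[ℂ] E)) : UniformlyExpansive L := by
  obtain ⟨m, hm, hpos⟩ := ((eventually_norm_le_mul_norm_pow_add_norm_symm_pow hL
    (ε := 1 / 4) (by norm_num)).and (eventually_gt_atTop 0)).exists
  refine ⟨m, hpos, fun x hx ↦ ?_⟩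
  by_contra! hlt
  linarith [hm x]

end UniformExpansivity

theorem uniformlyExpansive_of_shadowing_general (L : X ≃L[ℂ] X) (hsh : ShadowingProperty L)
    (hasymp : ∃ ε > (0 : ℝ), ∀ x : X, (∀ n : ℤ, ‖(L ^ n) x‖ ≤ ε) →
      Tendsto (fun n : ℕ ↦ (L ^ n) x) atTop (𝓝 0)) :
    UniformlyExpansive L := by
  obtain ⟨ε, hε, hasymp⟩ := hasymp
  exact uniformlyExpansive_of_sphere_subset_resolventSet (hsh.sphere_subset_resolventSet hε hasymp)

theorem uniformlyExpansive_of_shadowing (L : X ≃L[ℂ] X)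
    (hsh : ShadowingProperty L)
    (hexp : Expansive L ∨ AsymptoticallyExpansive L) :
    UniformlyExpansive L := by
  refine uniformlyExpansive_of_shadowing_general L hsh ?_
  rcases hexp with ⟨ε, hε, hexp⟩ | ⟨ε, hε, hasymp⟩
  · exact ⟨ε, hε, fun x hx ↦ by simp [hexp x hx]⟩
  · exact ⟨ε, hε, fun x hx ↦ hasymp x fun n ↦ mod_cast hx n⟩
end

section
/- Let X be a finite-dimensional complex Banach space and L : X → X an invertible linear operator. The following are equivalent: (1) L is hyperbolic; (2) L is expansive; (3) L has the shadowing property. -/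
open Filter Topology

variable {X : Type*} [NormedAddCommGroup X] [NormedSpace ℂ X] [CompleteSpace X]

/-- `L` is hyperbolic: its spectrum misses the unit circle. -/
def Hyperbolic (L : X ≃L[ℂ] X) : Prop :=
  ∀ z ∈ spectrum ℂ (L : X →L[ℂ] X), ‖z‖ ≠ 1

/-!
On the Banach space `ℓ^∞(ℤ, X)` consider the operator `D f = (n ↦ f (n + 1) - L (f n))`, the
difference of the left shift and of `L` acting pointwise. Expansivity of `L` is injectivity of `D`,
and shadowing is surjectivity of `D`: the open mapping theorem turns solvability of `D g = y` into
solvability with a uniform bound. If `L` is hyperbolic then `D` is invertible, because the shift, an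
isometry with spectrum in the unit circle, commutes with the pointwise action of `L`, whose spectrum
lies in that of `L`.

Conversely, let `‖z‖ = 1` and apply `D` to sequences `n ↦ z ^ n • v`: injectivity of `D` makes
`z - L` injective, and surjectivity of `D` gives `z - L` a dense range, by averaging over `n`. In
finite dimension either conclusion makes `z - L` invertible.
-/

open BoundedContinuousFunction Function

theorem isUnit_of_isUnit_coe_centralizer {R A : Type*} [CommSemiring R] [Semiring A] [Algebra R A]
    {s : Set A} {x : Subalgebra.centralizer R s} (hx : IsUnit (x : A)) : IsUnit x := by
  obtain ⟨u, hu⟩ := hx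
  have hinv : (↑u⁻¹ : A) ∈ Subalgebra.centralizer R s := Subalgebra.mem_centralizer_iff R |>.2
    fun g hg ↦ Commute.units_inv_right (hu ▸ (Subalgebra.mem_centralizer_iff R).1 x.2 g hg)
  exact ⟨⟨x, ⟨↑u⁻¹, hinv⟩, Subtype.ext (by simp [← hu]), Subtype.ext (by simp [← hu])⟩, rfl⟩

-- In the double commutant of `{a, b}`, a commutative Banach algebra with the same invertible
-- elements, a character vanishing at `a - b` would take a common spectral value at `a` and `b`.
theorem isUnit_sub_of_commute_of_disjoint_spectrum {A : Type*} [NormedRing A] [NormedAlgebra ℂ A]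
    [CompleteSpace A] {a b : A} (hab : Commute a b)
    (hdisj : Disjoint (spectrum ℂ a) (spectrum ℂ b)) : IsUnit (a - b) := by
  let B : Subalgebra ℂ A := Subalgebra.centralizer ℂ (Set.centralizer {a, b})
  have hpair : ∀ x ∈ ({a, b} : Set A), ∀ y ∈ ({a, b} : Set A), x * y = y * x := by
    rintro x (rfl | rfl) y (rfl | rfl)
    exacts [rfl, hab, hab.symm, rfl]
  let : NormedCommRing B :=
    { (inferInstance : NormedRing B) with
      mul_comm := fun x y ↦ Subtype.ext <|
        Set.centralizer_centralizer_comm_of_comm hpair x x.2 y y.2 }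
  have hclosed : IsClosed (B : Set A) := Set.isClosed_centralizer _
  have : CompleteSpace B := hclosed.completeSpace_coe
  have hspec (x : B) : spectrum ℂ x ⊆ spectrum ℂ (x : A) := fun z hz hzx ↦
    hz (isUnit_of_isUnit_coe_centralizer hzx)
  have hmem {x : A} (hx : x ∈ ({a, b} : Set A)) : x ∈ B := Set.subset_centralizer_centralizer hx
  let a' : B := ⟨a, hmem (.inl rfl)⟩
  let b' : B := ⟨b, hmem (.inr rfl)⟩
  suffices IsUnit (a' - b') from this.map B.val
  by_contra hunit
  obtain ⟨φ, hφ⟩ := WeakDual.CharacterSpace.exists_apply_eq_zero hunit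
  have heq : φ a' = φ b' := sub_eq_zero.1 (map_sub φ a' b' ▸ hφ)
  exact Set.disjoint_left.1 hdisj (hspec a' (AlgHom.apply_mem_spectrum φ a'))
    (heq ▸ hspec b' (AlgHom.apply_mem_spectrum φ b'))

theorem norm_eq_one_of_mem_spectrum_linearIsometryEquiv {𝕜 F : Type*} [NontriviallyNormedField 𝕜]
    [NormedAddCommGroup F] [NormedSpace 𝕜 F] [CompleteSpace F] (e : F ≃ₗᵢ[𝕜] F) {z : 𝕜}
    (hz : z ∈ spectrum 𝕜 (e : F →L[𝕜] F)) : ‖z‖ = 1 := by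
  have norm_le_one (e : F ≃ₗᵢ[𝕜] F) {w : 𝕜} (hw : w ∈ spectrum 𝕜 (e : F →L[𝕜] F)) : ‖w‖ ≤ 1 :=
    calc ‖w‖ ≤ ‖(e : F →L[𝕜] F)‖ * ‖(1 : F →L[𝕜] F)‖ := spectrum.norm_le_norm_mul_of_mem hw
      _ ≤ 1 * 1 := by
        gcongr
        · exact e.toLinearIsometry.norm_toContinuousLinearMap_le
        · exact ContinuousLinearMap.norm_id_le
      _ = 1 := one_mul 1
  let u : (F →L[𝕜] F)ˣ := e.toContinuousLinearEquiv.toUnit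
  have hz0 : z ≠ 0 := spectrum.ne_zero_of_mem_of_unit (a := u) hz
  have hinv : z⁻¹ ∈ spectrum 𝕜 (e.symm : F →L[𝕜] F) :=
    spectrum.inv_mem_iff (r := Units.mk0 z hz0) (a := u).1 hz
  have hinv_le : ‖z‖⁻¹ ≤ 1 := norm_inv z ▸ norm_le_one e.symm hinv
  exact (norm_le_one e hz).antisymm ((inv_le_one₀ (norm_pos_iff.2 hz0)).1 hinv_le)

theorem exists_ne_zero_norm_smul_lt (𝕜 : Type*) {F : Type*} [NontriviallyNormedField 𝕜]
    [SeminormedAddCommGroup F] [NormedSpace 𝕜 F] (x : F) {ε : ℝ} (hε : 0 < ε) :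
    ∃ c : 𝕜, c ≠ 0 ∧ ‖c • x‖ < ε := by
  obtain ⟨r, hr, hrx⟩ := exists_pos_mul_lt hε ‖x‖
  obtain ⟨c, hc, hcr⟩ := NormedField.exists_norm_lt 𝕜 hr
  refine ⟨c, norm_pos_iff.1 hc, ?_⟩
  calc ‖c • x‖ = ‖x‖ * ‖c‖ := by rw [norm_smul, mul_comm]
    _ ≤ ‖x‖ * r := by gcongr
    _ < ε := hrx

theorem exists_int_seq_forall_apply_add_one {α : Type*} (f : ℤ → α ≃ α) (a : α) :
    ∃ x : ℤ → α, x 0 = a ∧ ∀ n, x (n + 1) = f n (x n) := by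
  let x (n : ℤ) : α := n.inductionOn' 0 a (fun k _ y ↦ f k y) (fun k _ y ↦ (f (k - 1)).symm y)
  refine ⟨x, Int.inductionOn'_self, fun n ↦ ?_⟩
  rcases le_or_gt 0 n with hn | hn
  · exact Int.inductionOn'_add_one hn
  · have hpred : x n = (f n).symm (x (n + 1)) := by
      simpa [x] using Int.inductionOn'_sub_one (z := n + 1) (b := 0) (by lia)
        (zero := a) (succ := fun k _ y ↦ f k y) (pred := fun k _ y ↦ (f (k - 1)).symm y)
    rw [hpred, Equiv.apply_symm_apply]

-- By telescoping, `S - T` maps the mean of `u 0, …, u (N - 1)` to `v` up to `O(1 / N)`.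
theorem mem_closure_range_sub_of_bounded {𝕜 E F : Type*} [RCLike 𝕜] [AddCommGroup E] [Module 𝕜 E]
    [NormedAddCommGroup F] [NormedSpace 𝕜 F] {S T : E →ₗ[𝕜] F} {u : ℕ → E} {v : F} {C : ℝ}
    (hu : ∀ n, ‖S (u n)‖ ≤ C) (hv : ∀ n, S (u (n + 1)) - T (u n) = v) :
    v ∈ closure (Set.range (S - T)) := by
  have hsum (N : ℕ) : (S - T) (∑ n ∈ Finset.range N, u n) = N • v - (S (u N) - S (u 0)) :=
    calc (S - T) (∑ n ∈ Finset.range N, u n)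
        = ∑ n ∈ Finset.range N, (v - (S (u (n + 1)) - S (u n))) := by
          rw [map_sum]
          refine Finset.sum_congr rfl fun n _ ↦ ?_
          rw [LinearMap.sub_apply, ← hv n]
          abel
      _ = N • v - (S (u N) - S (u 0)) := by
          rw [Finset.sum_sub_distrib, Finset.sum_const, Finset.card_range,
            Finset.sum_range_sub fun n ↦ S (u n)]
  have hbound (N : ℕ) : ‖S (u N) - S (u 0)‖ ≤ C + C := norm_sub_le_of_le (hu N) (hu 0)
  have hlim : Tendsto (fun N : ℕ ↦ v - (N : 𝕜)⁻¹ • (S (u N) - S (u 0))) atTop (𝓝 v) := by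
    simpa using tendsto_const_nhds.sub <|
      (tendsto_inv_atTop_nhds_zero_nat (𝕜 := 𝕜)).zero_smul_isBoundedUnder_le
        (isBoundedUnder_of ⟨C + C, hbound⟩)
  refine mem_closure_of_tendsto hlim ?_
  filter_upwards [eventually_ne_atTop 0] with N hN
  refine ⟨(N : 𝕜)⁻¹ • ∑ n ∈ Finset.range N, u n, ?_⟩
  rw [map_smul, hsum, smul_sub, ← Nat.cast_smul_eq_nsmul 𝕜,
    inv_smul_smul₀ (Nat.cast_ne_zero.2 hN)]

section Zpow

variable {R M : Type*} [Semiring R] [TopologicalSpace M] [AddCommMonoid M] [Module R M]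

theorem zpow_add_one_apply (L : M ≃L[R] M) (n : ℤ) (x : M) : (L ^ (n + 1)) x = L ((L ^ n) x) := by
  rw [add_comm, zpow_one_add]; rfl

theorem zpow_apply_eq_of_forall_apply_add_one {L : M ≃L[R] M} {x : ℤ → M}
    (hx : ∀ n, x (n + 1) = L (x n)) (n : ℤ) : (L ^ n) (x 0) = x n := by
  induction n using Int.induction_on with
  | zero => rfl
  | succ n ih => rw [zpow_add_one_apply, ih, hx]
  | pred n ih =>
    apply L.injective
    rw [← zpow_add_one_apply, ← hx, sub_add_cancel, ih]

end Zpow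

section OrbitDefect

variable {𝕜 E : Type*} [NontriviallyNormedField 𝕜] [NormedAddCommGroup E] [NormedSpace 𝕜 E]

variable (𝕜 E) in
/-- The left shift `f ↦ (n ↦ f (n + 1))` on bounded bi-infinite sequences. -/
def leftShift : (ℤ →ᵇ E) ≃ₗᵢ[𝕜] (ℤ →ᵇ E) where
  toFun f := f.compContinuous ⟨fun n ↦ n + 1, continuous_of_discreteTopology⟩
  invFun f := f.compContinuous ⟨fun n ↦ n - 1, continuous_of_discreteTopology⟩
  map_add' _ _ := rfl
  map_smul' _ _ := rfl
  left_inv f := by ext n; simp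
  right_inv f := by ext n; simp
  norm_map' f := by
    simp only [norm_eq_iSup_norm]
    exact (Equiv.addRight (1 : ℤ)).iSup_comp (g := fun n ↦ ‖f n‖)

/-- Pointwise application `T ↦ (f ↦ T ∘ f)`, as a representation of the algebra of operators. -/
noncomputable def pointwiseAlgHom (α 𝕜 E : Type*) [TopologicalSpace α] [NontriviallyNormedField 𝕜]
    [NormedAddCommGroup E] [NormedSpace 𝕜 E] : (E →L[𝕜] E) →ₐ[𝕜] (α →ᵇ E) →L[𝕜] (α →ᵇ E) where
  toFun T := T.compLeftContinuousBounded α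
  map_one' := rfl
  map_mul' _ _ := rfl
  map_zero' := rfl
  map_add' _ _ := rfl
  commutes' c := by ext f n; simp

/-- The operator `f ↦ (n ↦ f (n + 1) - T (f n))` on bounded bi-infinite sequences. Its kernel
consists of the bounded orbits of `T`, its values are the errors of bounded pseudo-orbits. -/
noncomputable def orbitDefect (T : E →L[𝕜] E) : (ℤ →ᵇ E) →L[𝕜] (ℤ →ᵇ E) :=
  leftShift 𝕜 E - pointwiseAlgHom ℤ 𝕜 E T

@[simp]
theorem orbitDefect_apply (T : E →L[𝕜] E) (f : ℤ →ᵇ E) (n : ℤ) :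
    orbitDefect T f n = f (n + 1) - T (f n) := rfl

theorem isUnit_orbitDefect {E : Type*} [NormedAddCommGroup E] [NormedSpace ℂ E] [CompleteSpace E]
    {T : E →L[ℂ] E} (hT : ∀ z ∈ spectrum ℂ T, ‖z‖ ≠ 1) : IsUnit (orbitDefect T) := by
  have hcomm : Commute (leftShift ℂ E : (ℤ →ᵇ E) →L[ℂ] (ℤ →ᵇ E)) (pointwiseAlgHom ℤ ℂ E T) := rfl
  refine isUnit_sub_of_commute_of_disjoint_spectrum hcomm (Set.disjoint_left.2 fun z hz hzT ↦ ?_)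
  exact hT z (AlgHom.spectrum_apply_subset (pointwiseAlgHom ℤ ℂ E) T hzT)
    (norm_eq_one_of_mem_spectrum_linearIsometryEquiv _ hz)

/-- The sequence `n ↦ z ^ n • v`, bounded since `z` has modulus one. -/
noncomputable def rotatingSeq {z : 𝕜} (hz : ‖z‖ = 1) (v : E) : ℤ →ᵇ E :=
  .ofNormedAddCommGroup (fun n ↦ z ^ n • v) continuous_of_discreteTopology ‖v‖ fun n ↦ by
    simp [norm_smul, hz]

@[simp]
theorem rotatingSeq_apply {z : 𝕜} (hz : ‖z‖ = 1) (v : E) (n : ℤ) :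
    rotatingSeq hz v n = z ^ n • v := rfl

theorem orbitDefect_rotatingSeq (T : E →L[𝕜] E) {z : 𝕜} (hz : ‖z‖ = 1) (v : E) :
    orbitDefect T (rotatingSeq hz v) = rotatingSeq hz ((algebraMap 𝕜 (E →L[𝕜] E) z - T) v) := by
  have hz0 : z ≠ 0 := norm_ne_zero_iff.1 (hz ▸ one_ne_zero)
  ext n
  simp [zpow_add_one₀ hz0, smul_sub, mul_smul]

theorem injective_algebraMap_sub_of_injective_orbitDefect {T : E →L[𝕜] E} {z : 𝕜}
    (hT : Injective (orbitDefect T)) (hz : ‖z‖ = 1) :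
    Injective (algebraMap 𝕜 (E →L[𝕜] E) z - T) := by
  rw [injective_iff_map_eq_zero] at hT ⊢
  intro v hv
  have hseq : rotatingSeq hz v = 0 := hT _ <| by
    rw [orbitDefect_rotatingSeq, hv]
    ext n
    simp
  simpa using DFunLike.congr_fun hseq 0

theorem denseRange_algebraMap_sub_of_surjective_orbitDefect {𝕜 E : Type*} [RCLike 𝕜]
    [NormedAddCommGroup E] [NormedSpace 𝕜 E] {T : E →L[𝕜] E} {z : 𝕜}
    (hT : Surjective (orbitDefect T)) (hz : ‖z‖ = 1) :
    DenseRange (algebraMap 𝕜 (E →L[𝕜] E) z - T) := by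
  intro v
  have hz0 : z ≠ 0 := norm_ne_zero_iff.1 (hz ▸ one_ne_zero)
  obtain ⟨f, hf⟩ := hT (rotatingSeq hz v)
  refine mem_closure_range_sub_of_bounded (S := (algebraMap 𝕜 (E →L[𝕜] E) z).toLinearMap)
    (T := T.toLinearMap) (u := fun n ↦ (z ^ n)⁻¹ • f n) (C := ‖f‖) (fun n ↦ ?_) fun n ↦ ?_
  · simpa [norm_smul, hz] using f.norm_coe_le_norm n
  · have hn : f (n + 1) - T (f n) = z ^ n • v := by simpa using DFunLike.congr_fun hf (n : ℤ)
    calc z • (z ^ (n + 1))⁻¹ • f (n + 1 : ℕ) - T ((z ^ n)⁻¹ • f n)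
        = (z ^ n)⁻¹ • (f (n + 1) - T (f n)) := by
          simp [smul_sub, smul_smul, pow_succ, hz0]
      _ = v := by rw [hn, inv_smul_smul₀ (pow_ne_zero n hz0)]

end OrbitDefect

section Dynamics

variable {E : Type*} [NormedAddCommGroup E] [NormedSpace ℂ E] {L : E ≃L[ℂ] E}

theorem expansive_iff_injective_orbitDefect :
    Expansive L ↔ Injective (orbitDefect (L : E →L[ℂ] E)) := by
  rw [injective_iff_map_eq_zero]
  constructor
  · rintro ⟨ε, hε, hL⟩ f hf
    obtain ⟨c, hc, hcf⟩ := exists_ne_zero_norm_smul_lt ℂ f hε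
    have hcf_ker : orbitDefect (L : E →L[ℂ] E) (c • f) = 0 := by rw [map_smul, hf, smul_zero]
    have horbit (n : ℤ) : (L ^ n) ((c • f) 0) = (c • f) n :=
      zpow_apply_eq_of_forall_apply_add_one (x := ⇑(c • f))
        (fun n ↦ sub_eq_zero.1 (DFunLike.congr_fun hcf_ker n)) n
    have hzero : (c • f) 0 = 0 := hL _ fun n ↦
      (congrArg norm (horbit n)).trans_le (((c • f).norm_coe_le_norm n).trans hcf.le)
    have hcf0 : c • f = 0 := by
      ext n
      rw [← horbit n, hzero, map_zero, BoundedContinuousFunction.coe_zero, Pi.zero_apply]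
    exact (smul_eq_zero.1 hcf0).resolve_left hc
  · intro hker
    refine ⟨1, one_pos, fun x hx ↦ ?_⟩
    let orbit : ℤ →ᵇ E :=
      .ofNormedAddCommGroup (fun n ↦ (L ^ n) x) continuous_of_discreteTopology 1 hx
    have horbit : orbit = 0 := hker orbit <| by
      ext n
      exact sub_eq_zero.2 (zpow_add_one_apply L n x)
    exact DFunLike.congr_fun horbit 0

theorem ShadowingProperty.surjective_orbitDefect (hL : ShadowingProperty L) :
    Surjective (orbitDefect (L : E →L[ℂ] E)) := by
  intro y
  obtain ⟨δ, hδ, hshadow⟩ := hL 1 one_pos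
  obtain ⟨c, hc, hcy⟩ := exists_ne_zero_norm_smul_lt ℂ y hδ
  obtain ⟨x, -, hx⟩ : ∃ x : ℤ → E, x 0 = 0 ∧ ∀ n, x (n + 1) = L (x n) + (c • y) n :=
    exists_int_seq_forall_apply_add_one
      (fun n ↦ L.toEquiv.trans (Equiv.addRight ((c • y) n))) 0
  obtain ⟨p, hp⟩ := hshadow x fun n ↦
    calc ‖L (x n) - x (n + 1)‖ = ‖(c • y) n‖ := by rw [hx, sub_add_cancel_left, norm_neg]
      _ ≤ ‖c • y‖ := (c • y).norm_coe_le_norm n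
      _ ≤ δ := hcy.le
  let g : ℤ →ᵇ E := .ofNormedAddCommGroup (fun n ↦ x n - (L ^ n) p)
    continuous_of_discreteTopology 1 fun n ↦ norm_sub_rev (x n) _ ▸ hp n
  have hg : orbitDefect (L : E →L[ℂ] E) g = c • y := by
    ext n
    change x (n + 1) - (L ^ (n + 1)) p - L (x n - (L ^ n) p) = (c • y) n
    rw [hx, zpow_add_one_apply, map_sub]
    abel
  refine ⟨c⁻¹ • g, ?_⟩
  rw [map_smul, hg, inv_smul_smul₀ hc]

theorem shadowingProperty_of_surjective_orbitDefect [CompleteSpace E]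
    (hL : Surjective (orbitDefect (L : E →L[ℂ] E))) : ShadowingProperty L := by
  intro ε hε
  obtain ⟨C, hC, hpreimage⟩ := (orbitDefect (L : E →L[ℂ] E)).exists_preimage_norm_le hL
  refine ⟨ε / C, by positivity, fun x hx ↦ ?_⟩
  let y : ℤ →ᵇ E := .ofNormedAddCommGroup (fun n ↦ L (x n) - x (n + 1))
    continuous_of_discreteTopology (ε / C) hx
  obtain ⟨g, hgy, hg⟩ := hpreimage y
  have hsucc (n : ℤ) : x (n + 1) + g (n + 1) = L (x n + g n) := by
    have hn : g (n + 1) - L (g n) = L (x n) - x (n + 1) := DFunLike.congr_fun hgy n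
    rw [sub_eq_iff_eq_add.1 hn, L.map_add]
    abel
  refine ⟨x 0 + g 0, fun n ↦ ?_⟩
  calc ‖(L ^ n) (x 0 + g 0) - x n‖ = ‖g n‖ := by
        rw [zpow_apply_eq_of_forall_apply_add_one (x := fun n ↦ x n + g n) hsucc,
          add_sub_cancel_left]
    _ ≤ ‖g‖ := g.norm_coe_le_norm n
    _ ≤ C * ‖y‖ := hg
    _ ≤ C * (ε / C) := by
        gcongr
        exact (norm_le (by positivity)).2 hx
    _ = ε := mul_div_cancel₀ ε hC.ne'

theorem shadowingProperty_iff_surjective_orbitDefect [CompleteSpace E] :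
    ShadowingProperty L ↔ Surjective (orbitDefect (L : E →L[ℂ] E)) :=
  ⟨ShadowingProperty.surjective_orbitDefect, shadowingProperty_of_surjective_orbitDefect⟩

theorem Hyperbolic.bijective_orbitDefect [CompleteSpace E] (hL : Hyperbolic L) :
    Bijective (orbitDefect (L : E →L[ℂ] E)) :=
  ContinuousLinearMap.isUnit_iff_bijective.1 (isUnit_orbitDefect hL)

theorem hyperbolic_of_injective_orbitDefect [FiniteDimensional ℂ E]
    (hL : Injective (orbitDefect (L : E →L[ℂ] E))) : Hyperbolic L := by
  have := FiniteDimensional.complete ℂ E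
  intro z hz hz1
  have hinj := injective_algebraMap_sub_of_injective_orbitDefect hL hz1
  exact hz (ContinuousLinearMap.isUnit_iff_bijective.2
    ⟨hinj, LinearMap.injective_iff_surjective.1 hinj⟩)

theorem hyperbolic_of_surjective_orbitDefect [FiniteDimensional ℂ E]
    (hL : Surjective (orbitDefect (L : E →L[ℂ] E))) : Hyperbolic L := by
  have := FiniteDimensional.complete ℂ E
  intro z hz hz1
  let S : E →L[ℂ] E := algebraMap ℂ (E →L[ℂ] E) z - L
  have hdense : DenseRange S := denseRange_algebraMap_sub_of_surjective_orbitDefect hL hz1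
  have hclosed : IsClosed (Set.range S) := S.range.closed_of_finiteDimensional
  have hsurj : Surjective S :=
    Set.range_eq_univ.1 (hclosed.closure_eq ▸ hdense.closure_range)
  exact hz (ContinuousLinearMap.isUnit_iff_bijective.2
    ⟨LinearMap.injective_iff_surjective.2 hsurj, hsurj⟩)

end Dynamics

/-- In finite dimension, hyperbolicity, expansivity and shadowing are
equivalent. -/
theorem finiteDimensional_hyperbolic_expansive_shadowing
    [FiniteDimensional ℂ X] (L : X ≃L[ℂ] X) :
    (Hyperbolic L ↔ Expansive L) ∧ (Expansive L ↔ ShadowingProperty L) := by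
  have hexpansive : Hyperbolic L ↔ Expansive L :=
    ⟨fun h ↦ expansive_iff_injective_orbitDefect.2 h.bijective_orbitDefect.injective,
      fun h ↦ hyperbolic_of_injective_orbitDefect (expansive_iff_injective_orbitDefect.1 h)⟩
  have hshadowing : Hyperbolic L ↔ ShadowingProperty L :=
    ⟨fun h ↦ shadowingProperty_iff_surjective_orbitDefect.2 h.bijective_orbitDefect.surjective,
      fun h ↦ hyperbolic_of_surjective_orbitDefect
        (shadowingProperty_iff_surjective_orbitDefect.1 h)⟩
  exact ⟨hexpansive, hexpansive.symm.trans hshadowing⟩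
end
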